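/- arXiv:2603.21137 — 4 statements merged into one kernel-verified Lean document; each statement's English description precedes it below -/
import Mathlib

section
/- Let A be any n×n real matrix and let L be the 2n×2n block matrix L = [[0, Iₙ],[0, A]]. Then for every h ∈ ℝ, the matrix exponential has the block form exp(hL) = [[Iₙ, h φ₁(hA)],[0, exp(hA)]], where φ₁(hA) = ∫₀¹ exp(σ h A) dσ. -/
open Matrix

attribute [local instance] Matrix.linftyOpNormedRing Matrix.linftyOpNormedAlgebra in
theorem my_hasSum {m : Type} [Fintype m] [DecidableEq m] (M : Matrix m m ℝ) (i j : m) :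
    HasSum (fun k : ℕ => ((k.factorial : ℝ)⁻¹ * (M ^ k) i j)) (NormedSpace.exp M i j) := by
  have h := NormedSpace.exp_series_hasSum_exp' (𝕂 := ℝ) M
  exact (h.map (Matrix.entryAddMonoidHom ℝ i j) (continuous_id.matrix_elem i j))

attribute [local instance] Matrix.linftyOpNormedRing Matrix.linftyOpNormedAlgebra in
theorem my_hasDeriv {m : Type} [Fintype m] [DecidableEq m] (M : Matrix m m ℝ) (i j : m) (t : ℝ) :
    HasDerivAt (fun u : ℝ => NormedSpace.exp (u • M) i j) ((M * NormedSpace.exp (t • M)) i j) t := by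
  have h := hasDerivAt_exp_smul_const' (𝕂 := ℝ) M t
  let l : Matrix m m ℝ →L[ℝ] ℝ := ⟨Matrix.entryLinearMap ℝ ℝ i j, continuous_id.matrix_elem i j⟩
  exact l.hasFDerivAt.comp_hasDerivAt t h

theorem my_pow (n : ℕ) (B C : Matrix (Fin n) (Fin n) ℝ) (k : ℕ) :
    (Matrix.fromBlocks (0 : Matrix (Fin n) (Fin n) ℝ) B (0 : Matrix (Fin n) (Fin n) ℝ) C) ^ (k + 1) = Matrix.fromBlocks 0 (B * C ^ k) 0 (C ^ (k + 1)) := by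
  induction k with
  | zero => simp
  | succ k ih =>
    rw [pow_succ, ih, Matrix.fromBlocks_multiply]
    simp [pow_succ, Matrix.mul_assoc]

theorem my_22 (n : ℕ) (B C : Matrix (Fin n) (Fin n) ℝ) (i j : Fin n) :
    NormedSpace.exp (Matrix.fromBlocks (0 : Matrix (Fin n) (Fin n) ℝ) B (0 : Matrix (Fin n) (Fin n) ℝ) C) (Sum.inr i) (Sum.inr j) = NormedSpace.exp C i j := by
  refine (my_hasSum _ _ _).unique ?_
  convert my_hasSum C i j using 3 with k
  cases k with
  | zero => simp [Matrix.one_apply]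
  | succ k => simp [my_pow]

theorem my_col (n : ℕ) (B C : Matrix (Fin n) (Fin n) ℝ) (i : Fin n ⊕ Fin n) (j : Fin n) :
    NormedSpace.exp (Matrix.fromBlocks (0 : Matrix (Fin n) (Fin n) ℝ) B (0 : Matrix (Fin n) (Fin n) ℝ) C) i (Sum.inl j)
      = (1 : Matrix (Fin n ⊕ Fin n) (Fin n ⊕ Fin n) ℝ) i (Sum.inl j) := by
  refine (my_hasSum _ _ _).unique ?_
  convert hasSum_single (0 : ℕ) ?_ using 1
  · simp
  · intro k hk
    obtain ⟨k, rfl⟩ := Nat.exists_eq_succ_of_ne_zero hk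
    rcases i with i | i <;> simp [my_pow]

theorem my_12 (n : ℕ) (h : ℝ) (C : Matrix (Fin n) (Fin n) ℝ) (i j : Fin n) :
    NormedSpace.exp (Matrix.fromBlocks (0 : Matrix (Fin n) (Fin n) ℝ) (h • (1 : Matrix (Fin n) (Fin n) ℝ)) (0 : Matrix (Fin n) (Fin n) ℝ) C)
      (Sum.inl i) (Sum.inr j) = h * ∫ σ in (0:ℝ)..1, NormedSpace.exp (σ • C) i j := by
  set M := Matrix.fromBlocks (0 : Matrix (Fin n) (Fin n) ℝ) (h • (1 : Matrix (Fin n) (Fin n) ℝ)) (0 : Matrix (Fin n) (Fin n) ℝ) C with hM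
  have hd : ∀ t : ℝ, HasDerivAt (fun u : ℝ => NormedSpace.exp (u • M) (Sum.inl i) (Sum.inr j))
      (h * NormedSpace.exp (t • C) i j) t := by
    intro t
    convert my_hasDeriv M (Sum.inl i) (Sum.inr j) t using 1
    have h2 : ∀ a b, NormedSpace.exp (t • M) (Sum.inr a) (Sum.inr b)
        = NormedSpace.exp (t • C) a b := by
      intro a b
      rw [hM, Matrix.fromBlocks_smul, smul_zero]
      exact my_22 n _ _ a b
    rw [Matrix.mul_apply, Fintype.sum_sum_type]
    simp [hM, Matrix.one_apply]
    exact Or.inl (h2 i j).symm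
  have hc : Continuous fun t : ℝ => NormedSpace.exp (t • C) i j :=
    continuous_iff_continuousAt.2 fun t => (my_hasDeriv C i j t).continuousAt
  have := intervalIntegral.integral_eq_sub_of_hasDerivAt (a := 0) (b := 1) (fun t _ => hd t)
    ((continuous_const.mul hc).intervalIntegrable 0 1)
  rw [intervalIntegral.integral_const_mul] at this
  rw [this]
  simp [NormedSpace.exp_zero]

/-- **Block structure of the exponential of `L = [[0, Iₙ], [0, A]]`.**
For any real `n × n` matrix `A` and every `h ∈ ℝ`,
`exp(hL) = [[Iₙ, h φ₁(hA)], [0, exp(hA)]]` where `φ₁(hA) = ∫₀¹ exp(σhA) dσ`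
(computed entrywise). -/
theorem exp_block_triangular (n : ℕ) (A : Matrix (Fin n) (Fin n) ℝ) (h : ℝ) :
    NormedSpace.exp (h • Matrix.fromBlocks (0 : Matrix (Fin n) (Fin n) ℝ) (1 : Matrix (Fin n) (Fin n) ℝ) (0 : Matrix (Fin n) (Fin n) ℝ) A) =
      Matrix.fromBlocks (1 : Matrix (Fin n) (Fin n) ℝ)
        (h • Matrix.of fun i j => ∫ σ in (0:ℝ)..1, NormedSpace.exp (σ • h • A) i j)
        0 (NormedSpace.exp (h • A)) := by
  rw [Matrix.fromBlocks_smul, smul_zero]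
  ext i j
  rcases j with j | j
  · rw [my_col]
    rcases i with i | i <;> simp [Matrix.one_apply]
  · rcases i with i | i
    · rw [my_12]
      simp
    · rw [my_22]
      simp
end

section
/- Let A be an n×n real skew-symmetric matrix and let L be the 2n×2n block matrix L = [[0, Iₙ],[0, A]]. Then for every h ≥ 0, the operator norm (induced by the Euclidean norm on ℝ^{2n}) of exp(hL) satisfies ‖exp(hL)‖ ≤ 1 + h. In particular, for every V = (a, b) with a, b ∈ ℝⁿ, ‖exp(hL) V‖² ≤ (1 + h)² (‖a‖² + ‖b‖²). -/
open Matrix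

section helpers

attribute [local instance] Matrix.linftyOpNormedRing Matrix.linftyOpNormedAlgebra

/-- The components of `M *ᵥ v` selected by `f`, as a linear map of `M`. -/
noncomputable def blkProj {n : ℕ} (f : Fin n → Fin n ⊕ Fin n) (v : Fin n ⊕ Fin n → ℝ) :
    Matrix (Fin n ⊕ Fin n) (Fin n ⊕ Fin n) ℝ →ₗ[ℝ] EuclideanSpace ℝ (Fin n) where
  toFun M := WithLp.toLp 2 (fun i => (M *ᵥ v) (f i))
  map_add' M N := by ext i; simp [Matrix.add_mulVec]
  map_smul' c M := by ext i; simp [Matrix.smul_mulVec]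

lemma blkProj_hasDerivAt {n : ℕ} (f : Fin n → Fin n ⊕ Fin n) (v : Fin n ⊕ Fin n → ℝ)
    (L : Matrix (Fin n ⊕ Fin n) (Fin n ⊕ Fin n) ℝ) (t : ℝ) :
    HasDerivAt (fun s : ℝ => blkProj f v (NormedSpace.exp (s • L)))
      (blkProj f v (L * NormedSpace.exp (t • L))) t := by
  have h1 : HasDerivAt (fun s : ℝ => NormedSpace.exp (s • L)) (L * NormedSpace.exp (t • L)) t :=
    hasDerivAt_exp_smul_const' L t
  exact (LinearMap.toContinuousLinearMap (blkProj f v)).hasFDerivAt.comp_hasDerivAt t h1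

lemma skew_inner {n : ℕ} (A : Matrix (Fin n) (Fin n) ℝ) (hSkew : Aᵀ = -A)
    (q : EuclideanSpace ℝ (Fin n)) : inner ℝ q (Matrix.toEuclideanLin A q) = 0 := by
  have h1 : inner ℝ q (Matrix.toEuclideanLin A q) = (A *ᵥ q.ofLp) ⬝ᵥ q.ofLp := by
    simp [EuclideanSpace.inner_eq_star_dotProduct]
  have h2 : (A *ᵥ q.ofLp) ⬝ᵥ q.ofLp = -((A *ᵥ q.ofLp) ⬝ᵥ q.ofLp) := by
    conv_lhs => rw [dotProduct_comm, dotProduct_mulVec, ← mulVec_transpose, hSkew, neg_mulVec,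
      neg_dotProduct]
  rw [h1]; linarith

lemma blkProj_inl {n : ℕ} (A : Matrix (Fin n) (Fin n) ℝ) (v : Fin n ⊕ Fin n → ℝ)
    (M : Matrix (Fin n ⊕ Fin n) (Fin n ⊕ Fin n) ℝ) :
    blkProj Sum.inl v (Matrix.fromBlocks 0 1 0 A * M) = blkProj Sum.inr v M := by
  ext i
  simp [blkProj, ← Matrix.mulVec_mulVec, Matrix.fromBlocks_mulVec]

lemma blkProj_inr {n : ℕ} (A : Matrix (Fin n) (Fin n) ℝ) (v : Fin n ⊕ Fin n → ℝ)
    (M : Matrix (Fin n ⊕ Fin n) (Fin n ⊕ Fin n) ℝ) :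
    blkProj Sum.inr v (Matrix.fromBlocks 0 1 0 A * M)
      = Matrix.toEuclideanLin A (blkProj Sum.inr v M) := by
  ext i
  simp [blkProj, ← Matrix.mulVec_mulVec, Matrix.fromBlocks_mulVec, Function.comp_def]

lemma blk_bounds {n : ℕ} (A : Matrix (Fin n) (Fin n) ℝ) (hSkew : Aᵀ = -A)
    (h : ℝ) (hh : 0 ≤ h) (v : Fin n ⊕ Fin n → ℝ) :
    ‖blkProj Sum.inr v (NormedSpace.exp (h • Matrix.fromBlocks 0 1 0 A))‖
      = ‖blkProj Sum.inr v 1‖ ∧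
    ‖blkProj Sum.inl v (NormedSpace.exp (h • Matrix.fromBlocks 0 1 0 A))‖
      ≤ ‖blkProj Sum.inl v 1‖ + h * ‖blkProj Sum.inr v 1‖ := by
  set L : Matrix (Fin n ⊕ Fin n) (Fin n ⊕ Fin n) ℝ := Matrix.fromBlocks 0 1 0 A with hL
  have hq : ∀ t : ℝ, ‖blkProj Sum.inr v (NormedSpace.exp (t • L))‖ = ‖blkProj Sum.inr v 1‖ := by
    intro t
    have hd : ∀ t : ℝ, HasDerivAt
        (fun s : ℝ => ‖blkProj Sum.inr v (NormedSpace.exp (s • L))‖ ^ 2) 0 t := by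
      intro t
      have := (blkProj_hasDerivAt Sum.inr v L t).norm_sq
      rwa [hL, blkProj_inr, skew_inner A hSkew, mul_zero] at this
    have hc := is_const_of_deriv_eq_zero (fun t => (hd t).differentiableAt)
      (fun t => (hd t).deriv) t 0
    simp only [zero_smul, NormedSpace.exp_zero] at hc
    exact (sq_eq_sq₀ (norm_nonneg _) (norm_nonneg _)).1 hc
  refine ⟨hq h, ?_⟩
  have hp := norm_image_sub_le_of_norm_deriv_le_segment'
    (f := fun s : ℝ => blkProj Sum.inl v (NormedSpace.exp (s • L)))
    (a := 0) (b := h) (C := ‖blkProj Sum.inr v 1‖)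
    (fun x _ => (blkProj_hasDerivAt Sum.inl v L x).hasDerivWithinAt)
    (fun x _ => by rw [hL, blkProj_inl]; exact (hq x).le) h ⟨hh, le_rfl⟩
  simp only [zero_smul, NormedSpace.exp_zero, sub_zero] at hp
  have := norm_le_norm_add_norm_sub' (blkProj Sum.inl v (NormedSpace.exp (h • L)))
    (blkProj Sum.inl v 1)
  linarith

lemma norm_sq_blk {n : ℕ} (M : Matrix (Fin n ⊕ Fin n) (Fin n ⊕ Fin n) ℝ)
    (V : EuclideanSpace ℝ (Fin n ⊕ Fin n)) :
    ‖Matrix.toEuclideanLin M V‖ ^ 2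
      = ‖blkProj Sum.inl V.ofLp M‖ ^ 2 + ‖blkProj Sum.inr V.ofLp M‖ ^ 2 := by
  simp [EuclideanSpace.norm_sq_eq, blkProj]

lemma exp_block_norm_aux {n : ℕ} (A : Matrix (Fin n) (Fin n) ℝ) (hSkew : Aᵀ = -A)
    (h : ℝ) (hh : 0 ≤ h) (V : EuclideanSpace ℝ (Fin n ⊕ Fin n)) :
    ‖Matrix.toEuclideanLin (NormedSpace.exp (h • Matrix.fromBlocks
        (0 : Matrix (Fin n) (Fin n) ℝ) (1 : Matrix (Fin n) (Fin n) ℝ)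
        (0 : Matrix (Fin n) (Fin n) ℝ) A)) V‖ ^ 2
      ≤ (1 + h) ^ 2 * ‖V‖ ^ 2 := by
  obtain ⟨h1, h2⟩ := blk_bounds A hSkew h hh V.ofLp
  have h3 := norm_sq_blk 1 V
  have h4 : Matrix.toEuclideanLin (1 : Matrix (Fin n ⊕ Fin n) (Fin n ⊕ Fin n) ℝ) V = V := by
    ext i; simp
  rw [h4] at h3
  rw [norm_sq_blk, h1, h3]
  set a := ‖blkProj Sum.inl V.ofLp 1‖
  set b := ‖blkProj Sum.inr V.ofLp 1‖
  have h5 := pow_le_pow_left₀ (norm_nonneg _) h2 2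
  nlinarith [mul_nonneg hh (sq_nonneg (a - b)), mul_nonneg hh (sq_nonneg a),
    mul_nonneg hh (sq_nonneg b), mul_nonneg (mul_nonneg hh hh) (sq_nonneg a)]

end helpers


/-- **Operator-norm bound `‖exp(hL)‖ ≤ 1 + h` for `L = [[0, Iₙ], [0, A]]` with `A`
skew-symmetric.** For every `h ≥ 0`, the Euclidean operator norm of `exp(hL)` is at most
`1 + h`; in particular, for every `V = (a, b)` with `a, b ∈ ℝⁿ`,
`‖exp(hL) V‖² ≤ (1 + h)² (‖a‖² + ‖b‖²)`. -/
theorem exp_block_norm_le (n : ℕ) (A : Matrix (Fin n) (Fin n) ℝ) (hSkew : Aᵀ = -A)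
    (h : ℝ) (hh : 0 ≤ h) :
    (∀ V : EuclideanSpace ℝ (Fin n ⊕ Fin n),
      ‖Matrix.toEuclideanLin
          (NormedSpace.exp (h • Matrix.fromBlocks (0 : Matrix (Fin n) (Fin n) ℝ)
            (1 : Matrix (Fin n) (Fin n) ℝ) (0 : Matrix (Fin n) (Fin n) ℝ) A)) V‖
        ≤ (1 + h) * ‖V‖) ∧
    (∀ a b : EuclideanSpace ℝ (Fin n),
      ‖Matrix.toEuclideanLin
          (NormedSpace.exp (h • Matrix.fromBlocks (0 : Matrix (Fin n) (Fin n) ℝ)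
            (1 : Matrix (Fin n) (Fin n) ℝ) (0 : Matrix (Fin n) (Fin n) ℝ) A))
          ((WithLp.equiv 2 (Fin n ⊕ Fin n → ℝ)).symm
            (Sum.elim (WithLp.equiv 2 (Fin n → ℝ) a) (WithLp.equiv 2 (Fin n → ℝ) b)))‖ ^ 2
        ≤ (1 + h) ^ 2 * (‖a‖ ^ 2 + ‖b‖ ^ 2)) := by
  refine ⟨fun V => ?_, fun a b => ?_⟩
  · have := exp_block_norm_aux A hSkew h hh V
    rw [← mul_pow] at this
    exact (sq_le_sq₀ (norm_nonneg _) (by positivity)).1 this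
  · refine (exp_block_norm_aux A hSkew h hh _).trans_eq ?_
    congr 1
    simp [EuclideanSpace.norm_sq_eq]
end

section
/- (Stability of the symmetric exponential integrator) Let L be a real 2n×2n matrix such that ‖exp(hL)‖ ≤ 1 + h for all h ∈ [0,1], and let F : ℝ^{2n} → ℝ^{2n} be globally Lipschitz with Lipschitz constant L_F. Define the one-step map on pairs Φ_h(V₁, V₂) := (exp(2hL) V₂ + 2h exp(hL) F(V₂), V₁). Then there exists a constant C > 0, independent of h (one may take C = 3 + 4 L_F), such that for all h ∈ (0,1] and all 𝒱 = (V₁,V₂), 𝒲 = (W₁,W₂) ∈ ℝ^{2n} × ℝ^{2n}, ‖Φ_h(𝒱) − Φ_h(𝒲)‖ ≤ (1 + C h) ‖𝒱 − 𝒲‖. -/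
open Matrix

/-- **Stability of the symmetric exponential integrator.**
Let `L` be a real `2n × 2n` matrix with `‖exp(hL)‖ ≤ 1 + h` for all `h ∈ [0,1]` (stated
vectorwise in the Euclidean norm), and let `F` be globally Lipschitz with constant `L_F`.
For the one-step map `Φ_h(V₁, V₂) = (exp(2hL) V₂ + 2h exp(hL) F(V₂), V₁)` there is a
constant `C > 0`, independent of `h`, with
`‖Φ_h(𝒱) − Φ_h(𝒲)‖ ≤ (1 + Ch) ‖𝒱 − 𝒲‖` for all `h ∈ (0,1]` and all pairs `𝒱, 𝒲`,
where `‖(V₁,V₂)‖ = √(‖V₁‖² + ‖V₂‖²)`. -/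
theorem sEI_stability (n : ℕ) (L : Matrix (Fin (2 * n)) (Fin (2 * n)) ℝ)
    (hL : ∀ h ∈ Set.Icc (0:ℝ) 1, ∀ V : EuclideanSpace ℝ (Fin (2 * n)),
      ‖Matrix.toEuclideanLin (NormedSpace.exp (h • L)) V‖ ≤ (1 + h) * ‖V‖)
    (LF : NNReal) (F : EuclideanSpace ℝ (Fin (2 * n)) → EuclideanSpace ℝ (Fin (2 * n)))
    (hF : LipschitzWith LF F) :
    ∃ C > (0:ℝ), ∀ h ∈ Set.Ioc (0:ℝ) 1,
      ∀ V₁ V₂ W₁ W₂ : EuclideanSpace ℝ (Fin (2 * n)),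
        Real.sqrt
            (‖(Matrix.toEuclideanLin (NormedSpace.exp ((2 * h) • L)) V₂
                + (2 * h) • Matrix.toEuclideanLin (NormedSpace.exp (h • L)) (F V₂))
              - (Matrix.toEuclideanLin (NormedSpace.exp ((2 * h) • L)) W₂
                + (2 * h) • Matrix.toEuclideanLin (NormedSpace.exp (h • L)) (F W₂))‖ ^ 2
              + ‖V₁ - W₁‖ ^ 2)
          ≤ (1 + C * h) * Real.sqrt (‖V₁ - W₁‖ ^ 2 + ‖V₂ - W₂‖ ^ 2) := by
  have hLF : (0:ℝ) ≤ LF := LF.coe_nonneg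
  refine ⟨3 + 4 * LF, by positivity, ?_⟩
  rintro h ⟨h0, h1⟩ V₁ V₂ W₁ W₂
  have hexp : NormedSpace.exp ((2 * h) • L)
      = NormedSpace.exp (h • L) * NormedSpace.exp (h • L) := by
    rw [two_mul h, add_smul]
    exact Matrix.exp_add_of_commute _ _ (Commute.refl _)
  have hb := hL h ⟨h0.le, h1⟩
  have hmul : ∀ V, Matrix.toEuclideanLin (NormedSpace.exp ((2 * h) • L)) V
      = Matrix.toEuclideanLin (NormedSpace.exp (h • L))
        (Matrix.toEuclideanLin (NormedSpace.exp (h • L)) V) := by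
    intro V
    rw [hexp]
    simp [Matrix.toEuclideanLin, Matrix.toLpLin_apply, Matrix.mulVec_mulVec]
  simp only [hmul]
  generalize Matrix.toEuclideanLin (NormedSpace.exp (h • L)) = A at hb
  have hFd : ‖F V₂ - F W₂‖ ≤ LF * ‖V₂ - W₂‖ := hF.norm_sub_le V₂ W₂
  have heq : (A (A V₂) + (2 * h) • A (F V₂)) - (A (A W₂) + (2 * h) • A (F W₂))
      = A (A (V₂ - W₂)) + (2 * h) • A (F V₂ - F W₂) := by
    simp only [map_sub, smul_sub]
    abel
  rw [heq]
  have d0 := norm_nonneg (V₂ - W₂)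
  have e1 : ‖A (A (V₂ - W₂))‖ ≤ (1 + h) * ((1 + h) * ‖V₂ - W₂‖) :=
    (hb _).trans (mul_le_mul_of_nonneg_left (hb _) (by linarith))
  have e2 : ‖(2 * h) • A (F V₂ - F W₂)‖ ≤ (2 * h) * ((1 + h) * (LF * ‖V₂ - W₂‖)) := by
    rw [norm_smul, Real.norm_of_nonneg (by linarith)]
    exact mul_le_mul_of_nonneg_left
      ((hb _).trans (mul_le_mul_of_nonneg_left hFd (by linarith))) (by linarith)
  have hK : (1 + h) * (1 + h) + 2 * h * (1 + h) * LF ≤ 1 + (3 + 4 * LF) * h := by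
    have a1 : h * h ≤ h := by nlinarith
    have a2 : h * h * LF ≤ h * LF := mul_le_mul_of_nonneg_right a1 hLF
    nlinarith
  have e3 : ‖A (A (V₂ - W₂)) + (2 * h) • A (F V₂ - F W₂)‖
      ≤ (1 + (3 + 4 * LF) * h) * ‖V₂ - W₂‖ := by
    refine (norm_add_le _ _).trans ((add_le_add e1 e2).trans ?_)
    have := mul_le_mul_of_nonneg_right hK d0
    linarith
  have hK1 : 1 ≤ 1 + (3 + 4 * (LF:ℝ)) * h := by
    have : 0 ≤ (3 + 4 * (LF:ℝ)) * h := by positivity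
    linarith
  generalize 1 + (3 + 4 * (LF:ℝ)) * h = K at *
  have e4 : ‖V₁ - W₁‖ ≤ K * ‖V₁ - W₁‖ := le_mul_of_one_le_left (norm_nonneg _) hK1
  apply Real.sqrt_le_iff.mpr
  refine ⟨by positivity, ?_⟩
  rw [mul_pow, Real.sq_sqrt (by positivity)]
  have f1 := pow_le_pow_left₀ (norm_nonneg _) e3 2
  have f2 := pow_le_pow_left₀ (norm_nonneg _) e4 2
  rw [mul_pow] at f1 f2
  linarith
end

section
/- (Second-order convergence of the sEI) Let L be a real m×m matrix with ‖exp(hL)‖ ≤ 1 + h for h ∈ [0,1], and let F : ℝ^m → ℝ^m be C² with F, DF, D²F globally bounded (in particular F is globally Lipschitz). Let T > 0 and let U : [0, T] → ℝ^m be the exact solution of U' = LU + F(U). For a step size h ∈ (0, 1], define the numerical solution by U¹ = exp(hL) U⁰ + h exp(hL) F(U⁰) with U⁰ = U(0), and Uⁿ⁺¹ = exp(2hL) Uⁿ⁻¹ + 2h exp(hL) F(Uⁿ) for n ≥ 1. Then there exists a constant C, independent of n and h but depending on T, such that ‖U(nh) − Uⁿ‖ ≤ C h² for all 0 ≤ n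 ≤ T/h. -/
open Matrix

/-- Mean value inequality with a power weight around the base point. -/
lemma sEI_mvt {E : Type*} [NormedAddCommGroup E] [NormedSpace ℝ E] {T K : ℝ} (hK : 0 ≤ K)
    {f f' : ℝ → E} (p : ℕ)
    (hf : ∀ t ∈ Set.Icc (0:ℝ) T, HasDerivWithinAt f (f' t) (Set.Icc (0:ℝ) T) t)
    {x y : ℝ} (hx : x ∈ Set.Icc (0:ℝ) T) (hy : y ∈ Set.Icc (0:ℝ) T)
    (hb : ∀ t ∈ Set.Icc (0:ℝ) T, ‖f' t‖ ≤ K * |t - x| ^ p) :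
    ‖f y - f x‖ ≤ K * |y - x| ^ (p + 1) := by
  have hsub : Set.uIcc x y ⊆ Set.Icc (0:ℝ) T := Set.uIcc_subset_Icc hx hy
  have := Convex.norm_image_sub_le_of_norm_hasDerivWithin_le (f := f) (f' := f')
    (s := Set.uIcc x y) (x := x) (y := y) (C := K * |y - x| ^ p)
    (fun t ht => (hf t (hsub ht)).mono hsub)
    (fun t ht => (hb t (hsub ht)).trans (by
      have : |t - x| ≤ |y - x| := Set.abs_sub_left_of_mem_uIcc ht
      gcongr)) (convex_uIcc x y) Set.left_mem_uIcc Set.right_mem_uIcc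
  rw [Real.norm_eq_abs] at this
  calc _ ≤ _ := this
    _ = _ := by ring

/-- First-order Taylor bound. -/
lemma sEI_taylor1 {E : Type*} [NormedAddCommGroup E] [NormedSpace ℝ E] {T K : ℝ} (hK : 0 ≤ K)
    {f f' : ℝ → E}
    (hf : ∀ t ∈ Set.Icc (0:ℝ) T, HasDerivWithinAt f (f' t) (Set.Icc (0:ℝ) T) t)
    (hlip : ∀ s ∈ Set.Icc (0:ℝ) T, ∀ t ∈ Set.Icc (0:ℝ) T, ‖f' s - f' t‖ ≤ K * |s - t|)
    {x y : ℝ} (hx : x ∈ Set.Icc (0:ℝ) T) (hy : y ∈ Set.Icc (0:ℝ) T) :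
    ‖f y - f x - (y - x) • f' x‖ ≤ K * |y - x| ^ 2 := by
  have := sEI_mvt (T := T) (K := K) hK (f := fun t => f t - (t - x) • f' x)
    (f' := fun t => f' t - f' x) 1 (fun t ht => by
      have h1 : HasDerivWithinAt (fun t : ℝ => (t - x) • f' x) ((1:ℝ) • f' x)
        (Set.Icc (0:ℝ) T) t := (((hasDerivAt_id t).sub_const x).smul_const (f' x)).hasDerivWithinAt
      exact ((hf t ht).sub h1).congr_deriv (by simp)) hx hy
    (fun t ht => by simpa using hlip t ht x hx)
  simp only [sub_self, zero_smul, sub_zero] at this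
  convert this using 2
  abel

/-- Second-order Taylor bound. -/
lemma sEI_taylor2 {E : Type*} [NormedAddCommGroup E] [NormedSpace ℝ E] {T K : ℝ} (hK : 0 ≤ K)
    {f g k : ℝ → E}
    (hf : ∀ t ∈ Set.Icc (0:ℝ) T, HasDerivWithinAt f (g t) (Set.Icc (0:ℝ) T) t)
    (hg : ∀ t ∈ Set.Icc (0:ℝ) T, HasDerivWithinAt g (k t) (Set.Icc (0:ℝ) T) t)
    (hlip : ∀ s ∈ Set.Icc (0:ℝ) T, ∀ t ∈ Set.Icc (0:ℝ) T, ‖k s - k t‖ ≤ K * |s - t|)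
    {x y : ℝ} (hx : x ∈ Set.Icc (0:ℝ) T) (hy : y ∈ Set.Icc (0:ℝ) T) :
    ‖f y - f x - (y - x) • g x - ((y - x) ^ 2 / 2) • k x‖ ≤ K * |y - x| ^ 3 := by
  have := sEI_mvt (T := T) (K := K) hK
    (f := fun t => f t - (t - x) • g x - ((t - x) ^ 2 / 2) • k x)
    (f' := fun t => g t - g x - (t - x) • k x) 2 (fun t ht => by
      have h1 : HasDerivWithinAt (fun t : ℝ => (t - x) • g x) ((1:ℝ) • g x)
        (Set.Icc (0:ℝ) T) t := (((hasDerivAt_id t).sub_const x).smul_const (g x)).hasDerivWithinAt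
      have h2 : HasDerivAt (fun t : ℝ => (t - x) ^ 2 / 2) (t - x) t := by
        have := (((hasDerivAt_id t).sub_const x).pow 2).div_const 2
        simpa using this
      have h3 := (h2.smul_const (k x)).hasDerivWithinAt (s := Set.Icc (0:ℝ) T)
      exact (((hf t ht).sub h1).sub h3).congr_deriv (by simp)) hx hy
    (fun t ht => sEI_taylor1 hK hg hlip hx ht)
  simp only [sub_self, zero_smul, sub_zero, ne_eq, OfNat.ofNat_ne_zero, not_false_eq_true,
    zero_pow, zero_div] at this
  convert this using 2
  abel

/-- Symmetric two-step local error. -/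
lemma sEI_local {E : Type*} [NormedAddCommGroup E] [NormedSpace ℝ E] {T K : ℝ} (hK : 0 ≤ K)
    {f g k : ℝ → E}
    (hf : ∀ t ∈ Set.Icc (0:ℝ) T, HasDerivWithinAt f (g t) (Set.Icc (0:ℝ) T) t)
    (hg : ∀ t ∈ Set.Icc (0:ℝ) T, HasDerivWithinAt g (k t) (Set.Icc (0:ℝ) T) t)
    (hlip : ∀ s ∈ Set.Icc (0:ℝ) T, ∀ t ∈ Set.Icc (0:ℝ) T, ‖k s - k t‖ ≤ K * |s - t|)
    {t h : ℝ} (hh : 0 ≤ h) (h1 : 0 ≤ t - h) (h2 : t + h ≤ T) :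
    ‖f (t + h) - f (t - h) - (2 * h) • g t‖ ≤ 2 * K * h ^ 3 := by
  have ht : t ∈ Set.Icc (0:ℝ) T := ⟨by linarith, by linarith⟩
  have hp := sEI_taylor2 hK hf hg hlip ht (y := t + h) ⟨by linarith, by linarith⟩
  have hm := sEI_taylor2 hK hf hg hlip ht (y := t - h) ⟨by linarith, by linarith⟩
  have e1 : t + h - t = h := by ring
  have e2 : t - h - t = -h := by ring
  rw [e1, abs_of_nonneg hh] at hp
  rw [e2, abs_neg, abs_of_nonneg hh] at hm
  have : f (t + h) - f (t - h) - (2 * h) • g t =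
      (f (t + h) - f t - h • g t - (h ^ 2 / 2) • k t) -
      (f (t - h) - f t - (-h) • g t - ((-h) ^ 2 / 2) • k t) := by
    module
  rw [this]
  exact (norm_sub_le _ _).trans (by linarith)

/-- Discrete Gronwall inequality for the two-step recursion. -/
lemma sEI_gronwall {d : ℕ → ℝ} {N : ℕ} {a b c : ℝ} (ha : 0 ≤ a) (hb : 0 ≤ b) (hc : 0 ≤ c)
    (h0 : d 0 ≤ b) (h1 : 1 ≤ N → d 1 ≤ b)
    (hrec : ∀ n, n + 2 ≤ N → d (n + 2) ≤ d n + a * d (n + 1) + c) :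
    ∀ n, n ≤ N → d n ≤ (b + n * c) * (1 + a) ^ n := by
  intro n
  induction n using Nat.twoStepInduction with
  | zero => intro _; simpa using h0
  | one =>
    intro hN
    have := h1 hN
    simp only [Nat.cast_one, one_mul, pow_one]
    nlinarith [mul_nonneg ha hb, mul_nonneg ha hc]
  | more n ih1 ih2 =>
    intro hN
    have i1 := ih1 (by omega)
    have i2 := ih2 (by omega)
    have hr := hrec n hN
    have hq : 1 ≤ 1 + a := by linarith
    have hqn : 1 ≤ (1 + a) ^ n := one_le_pow₀ hq
    push_cast at *
    set Q := (1 + a) ^ n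
    have hA : 0 ≤ b + n * c := by positivity
    have e1 : (1 + a) ^ (n + 1) = Q * (1 + a) := pow_succ _ _
    have e2 : (1 + a) ^ (n + 2) = Q * (1 + a) * (1 + a) := by rw [pow_succ, pow_succ]
    rw [e1] at i2
    rw [e2]
    have i3 : a * d (n + 1) ≤ a * ((b + (n + 1) * c) * (Q * (1 + a))) := by gcongr
    have hQ1 : Q ≤ Q * (1 + a) := le_mul_of_one_le_right (by linarith) hq
    have hQ2 : 1 ≤ Q * (1 + a) * (1 + a) := by nlinarith
    have i4 : (b + n * c) * Q ≤ (b + (n + 1) * c) * (Q * (1 + a)) := by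
      have : b + n * c ≤ b + (n + 1) * c := by nlinarith
      gcongr
    nlinarith [mul_le_mul_of_nonneg_left hQ2 hc]

/-- Abstract version, with a one-parameter group `S` generated by `A`. -/
theorem sEI_abstract {E : Type*} [NormedAddCommGroup E] [NormedSpace ℝ E]
    (A : E →L[ℝ] E) (S : ℝ → E →L[ℝ] E) (hS0 : S 0 = 1)
    (hadd : ∀ a b, S (a + b) = S a * S b) (hSd : ∀ t, HasDerivAt S (S t * A) t)
    (F : E → E) (hF : ContDiff ℝ 2 F) (M : ℝ) (hDFb : ∀ x, ‖fderiv ℝ F x‖ ≤ M)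
    (T : ℝ) (hT : 0 < T) (U : ℝ → E)
    (hU : ∀ t ∈ Set.Icc (0:ℝ) T,
      HasDerivWithinAt U (A (U t) + F (U t)) (Set.Icc (0:ℝ) T) t) :
    ∃ C : ℝ, ∀ h ∈ Set.Ioc (0:ℝ) 1, ∀ Un : ℕ → E,
      Un 0 = U 0 →
      Un 1 = S h (U 0) + h • S h (F (U 0)) →
      (∀ n : ℕ, 1 ≤ n →
        Un (n + 1) = S (2 * h) (Un (n - 1)) + (2 * h) • S h (F (Un n))) →
      ∀ n : ℕ, (n : ℝ) ≤ T / h → ‖U (n * h) - Un n‖ ≤ C * h ^ 2 := by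
  have hM : 0 ≤ M := (norm_nonneg _).trans (hDFb 0)
  have hScont : Continuous S := continuous_iff_continuousAt.2 fun t => (hSd t).continuousAt
  have hSC : ContDiff ℝ 1 S := by
    rw [contDiff_one_iff_deriv]
    refine ⟨fun t => (hSd t).differentiableAt, ?_⟩
    have : deriv S = fun t => S t * A := funext fun t => (hSd t).deriv
    rw [this]
    exact hScont.mul continuous_const
  have hUcont : ContinuousOn U (Set.Icc (0:ℝ) T) := fun t ht => (hU t ht).continuousWithinAt
  have hud : UniqueDiffOn ℝ (Set.Icc (0:ℝ) T) := uniqueDiffOn_Icc hT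
  have hUC : ContDiffOn ℝ 1 U (Set.Icc (0:ℝ) T) := by
    have := (contDiffOn_succ_iff_derivWithin (𝕜 := ℝ) (n := 0) (f := U) hud).2
      ⟨fun t ht => (hU t ht).differentiableWithinAt, by simp, by
        rw [contDiffOn_zero]
        have hc : ContinuousOn (fun t => A (U t) + F (U t)) (Set.Icc (0:ℝ) T) :=
          (A.continuous.comp_continuousOn hUcont).add (hF.continuous.comp_continuousOn hUcont)
        exact hc.congr fun t ht => (hU t ht).derivWithin (hud t ht)⟩
    simpa using this
  -- pulled back solution and its derivatives
  set V : ℝ → E := fun t => S (-t) (U t) with hV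
  set g : ℝ → E := fun t => S (-t) (F (U t)) with hg
  set k : ℝ → E := fun t => S (-t) (fderiv ℝ F (U t) (A (U t) + F (U t))) - S (-t) (A (F (U t)))
    with hk
  have hSneg : ∀ t, HasDerivAt (fun t => S (-t)) (-(S (-t) * A)) t := by
    intro t
    have := (hSd (-t)).scomp t (hasDerivAt_neg t)
    simpa [Function.comp_def] using this
  have hVd : ∀ t ∈ Set.Icc (0:ℝ) T, HasDerivWithinAt V (g t) (Set.Icc (0:ℝ) T) t := by
    intro t ht
    have := (hSneg t).hasDerivWithinAt (s := Set.Icc (0:ℝ) T) |>.clm_apply (hU t ht)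
    convert this using 1
    simp [hg]
  have hgd : ∀ t ∈ Set.Icc (0:ℝ) T, HasDerivWithinAt g (k t) (Set.Icc (0:ℝ) T) t := by
    intro t ht
    have hFd : HasFDerivAt F (fderiv ℝ F (U t)) (U t) :=
      (hF.differentiable (by norm_num) (U t)).hasFDerivAt
    have := (hSneg t).hasDerivWithinAt (s := Set.Icc (0:ℝ) T) |>.clm_apply
      (hFd.comp_hasDerivWithinAt t (hU t ht))
    refine this.congr_deriv ?_
    change -(S (-t) (A (F (U t)))) + _ = _ - _
    abel
  have hSnC : ContDiffOn ℝ 1 (fun t => S (-t)) (Set.Icc (0:ℝ) T) :=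
    (hSC.comp contDiff_neg).contDiffOn
  have hF1 : ContDiff ℝ 1 F := hF.of_le (by norm_num)
  have hFU : ContDiffOn ℝ 1 (fun t => F (U t)) (Set.Icc (0:ℝ) T) := hF1.comp_contDiffOn hUC
  have hDF : ContDiff ℝ 1 (fderiv ℝ F) := hF.fderiv_right (by norm_num)
  have hgC : ContDiffOn ℝ 1 g (Set.Icc (0:ℝ) T) := hSnC.clm_apply hFU
  have hkC : ContDiffOn ℝ 1 k (Set.Icc (0:ℝ) T) :=
    (hSnC.clm_apply ((hDF.comp_contDiffOn hUC).clm_apply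
      ((A.contDiff.comp_contDiffOn hUC).add hFU))).sub
      (hSnC.clm_apply (A.contDiff.comp_contDiffOn hFU))
  obtain ⟨K1, hK1⟩ := hgC.exists_lipschitzOnWith (by norm_num) (convex_Icc _ _) isCompact_Icc
  obtain ⟨K2, hK2⟩ := hkC.exists_lipschitzOnWith (by norm_num) (convex_Icc _ _) isCompact_Icc
  have hglip : ∀ s ∈ Set.Icc (0:ℝ) T, ∀ t ∈ Set.Icc (0:ℝ) T, ‖g s - g t‖ ≤ K1 * |s - t| :=
    fun s hs t ht => by simpa using hK1.norm_sub_le hs ht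
  have hklip : ∀ s ∈ Set.Icc (0:ℝ) T, ∀ t ∈ Set.Icc (0:ℝ) T, ‖k s - k t‖ ≤ K2 * |s - t| :=
    fun s hs t ht => by simpa using hK2.norm_sub_le hs ht
  obtain ⟨B, hB⟩ := (isCompact_Icc (a := -T) (b := T)).exists_bound_of_continuousOn
    hScont.continuousOn
  have hB0 : 0 ≤ B := (norm_nonneg _).trans (hB 0 ⟨by linarith, by linarith⟩)
  have hFlip : ∀ x y, ‖F x - F y‖ ≤ M * ‖x - y‖ := fun x y =>
    Convex.norm_image_sub_le_of_norm_fderiv_le (𝕜 := ℝ) (s := Set.univ)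
      (fun x _ => hF.differentiable (by norm_num) x) (fun x _ => hDFb x) convex_univ
      (Set.mem_univ _) (Set.mem_univ _)
  have hinv : ∀ t x, S t (S (-t) x) = x := by
    intro t x
    have := hadd t (-t)
    rw [add_neg_cancel, hS0] at this
    have h2 := congrArg (fun f : E →L[ℝ] E => f x) this
    simpa using h2.symm
  have hSS : ∀ a b c, a + b = c → ∀ x, S a (S b x) = S c x := by
    intro a b c hc x
    rw [← hc, hadd]; rfl
  have hK1' := K1.coe_nonneg
  have hK2' := K2.coe_nonneg
  refine ⟨B * ((K1 + T * (2 * K2)) * Real.exp (2 * (B * M * B) * T)), ?_⟩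
  rintro h ⟨h0, h1⟩ Un hU0 hU1 hUn N hN
  have hNT : N * h ≤ T := by rwa [le_div_iff₀ h0] at hN
  have hmem : ∀ n : ℕ, n ≤ N → (n * h : ℝ) ∈ Set.Icc (0:ℝ) T := fun n hn =>
    ⟨by positivity, le_trans (by gcongr) hNT⟩
  have hBp : ∀ t ∈ Set.Icc (0:ℝ) T, ∀ x, ‖S t x‖ ≤ B * ‖x‖ := fun t ht x =>
    ((S t).le_opNorm x).trans (by
      have := hB t ⟨by linarith [ht.1], ht.2⟩
      gcongr)
  have hBn : ∀ t ∈ Set.Icc (0:ℝ) T, ∀ x, ‖S (-t) x‖ ≤ B * ‖x‖ := fun t ht x =>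
    ((S (-t)).le_opNorm x).trans (by
      have := hB (-t) ⟨by linarith [ht.2], by linarith [ht.1]⟩
      gcongr)
  set d : ℕ → E := fun n => S (-(n * h)) (U (n * h) - Un n) with hd
  have hed : ∀ n : ℕ, n ≤ N → ‖U (n * h) - Un n‖ ≤ B * ‖d n‖ := by
    intro n hn
    have := hBp _ (hmem n hn) (d n)
    rwa [hd, hinv] at this
  have hd0 : d 0 = 0 := by simp [hd, hU0]
  have hd1 : 1 ≤ N → ‖d 1‖ ≤ K1 * h ^ 2 := by
    intro hN1
    have hm := hmem 1 hN1
    have hm0 := hmem 0 (Nat.zero_le _)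
    have := sEI_taylor1 hK1' hVd hglip hm0 hm
    simp only [Nat.cast_one, one_mul, Nat.cast_zero, zero_mul, sub_zero, abs_of_pos h0] at this
    convert this using 2
    simp only [hd, hV, hg, hU1, Nat.cast_one, one_mul, map_sub, map_add, map_smul,
      hSS (-h) h 0 (by ring), hS0, neg_zero]
    simp only [one_apply_eq_self]
    abel
  have hrec : ∀ n, n + 2 ≤ N →
      ‖d (n + 2)‖ ≤ ‖d n‖ + (2 * h * (B * M * B)) * ‖d (n + 1)‖ + 2 * K2 * h ^ 3 := by
    intro n hn
    set t : ℝ := (n + 1 : ℕ) * h with ht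
    have htm : t ∈ Set.Icc (0:ℝ) T := hmem (n + 1) (by omega)
    have ep : ((n + 2 : ℕ) : ℝ) * h = t + h := by rw [ht]; push_cast; ring
    have em : (n : ℝ) * h = t - h := by rw [ht]; push_cast; ring
    have hloc := sEI_local hK2' hVd hgd hklip (t := t) h0.le
      (by rw [← em]; positivity) (by rw [← ep]; exact (hmem (n + 2) hn).2)
    have hUn' := hUn (n + 1) (by omega)
    simp only [Nat.add_sub_cancel] at hUn'
    have hdd : d (n + 2) = d n + (2 * h) • S (-t) (F (U t) - F (Un (n + 1)))
        + (V (t + h) - V (t - h) - (2 * h) • g t) := by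
      have e2 : Un (n + 2) = _ := hUn'
      simp only [hd, ep, em, e2, hV, hg, map_sub, map_add, map_smul]
      rw [hSS (-(t + h)) (2 * h) (-(t - h)) (by ring), hSS (-(t + h)) h (-t) (by ring)]
      module
    have hdiff : ‖S (-t) (F (U t) - F (Un (n + 1)))‖ ≤ (B * M * B) * ‖d (n + 1)‖ := by
      calc _ ≤ B * ‖F (U t) - F (Un (n + 1))‖ := hBn t htm _
        _ ≤ B * (M * ‖U t - Un (n + 1)‖) := by gcongr; exact hFlip _ _
        _ ≤ B * (M * (B * ‖d (n + 1)‖)) := by gcongr; exact hed (n + 1) (by omega)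
        _ = _ := by ring
    rw [hdd]
    refine (norm_add₃_le).trans ?_
    have hs : ‖(2 * h) • S (-t) (F (U t) - F (Un (n + 1)))‖
        ≤ (2 * h * (B * M * B)) * ‖d (n + 1)‖ := by
      rw [norm_smul, Real.norm_of_nonneg (by positivity), mul_assoc (2 * h)]
      gcongr
    gcongr
  have hfin := sEI_gronwall (d := fun n => ‖d n‖) (N := N) (a := 2 * h * (B * M * B))
    (b := K1 * h ^ 2) (c := 2 * K2 * h ^ 3) (by positivity) (by positivity) (by positivity)
    (by simp only [hd0, norm_zero]; positivity) hd1 hrec N le_rfl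
  have hexp : (1 + 2 * h * (B * M * B)) ^ N ≤ Real.exp (2 * (B * M * B) * T) := by
    calc (1 + 2 * h * (B * M * B)) ^ N ≤ (Real.exp (2 * h * (B * M * B))) ^ N := by
          gcongr
          linarith [Real.add_one_le_exp (2 * h * (B * M * B))]
      _ = Real.exp (2 * (B * M * B) * (N * h)) := by rw [← Real.exp_nat_mul]; ring_nf
      _ ≤ _ := by gcongr
  have hcoef : K1 * h ^ 2 + N * (2 * K2 * h ^ 3) ≤ (K1 + T * (2 * K2)) * h ^ 2 := by
    have : (N * h) * (2 * K2 * h ^ 2) ≤ T * (2 * K2 * h ^ 2) := by gcongr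
    linarith
  calc ‖U (N * h) - Un N‖ ≤ B * ‖d N‖ := hed N le_rfl
    _ ≤ B * (((K1 + T * (2 * K2)) * h ^ 2) * Real.exp (2 * (B * M * B) * T)) := by
        gcongr
        exact hfin.trans (by gcongr)
    _ = _ := by ring

/-- Group law for `t ↦ exp (t x)`. -/
lemma sEI_exp_add {R : Type*} [NormedRing R] [NormedAlgebra ℝ R] [CompleteSpace R] (x : R)
    (a b : ℝ) : NormedSpace.exp ((a + b) • x) =
      NormedSpace.exp (a • x) * NormedSpace.exp (b • x) := by
  letI := NormedAlgebra.restrictScalars ℚ ℝ R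
  rw [add_smul]
  exact NormedSpace.exp_add_of_commute (((Commute.refl _).smul_left a).smul_right b)

lemma sEI_exp_zero {R : Type*} [NormedRing R] [NormedAlgebra ℝ R] (x : R) :
    NormedSpace.exp ((0:ℝ) • x) = 1 := by
  rw [zero_smul, NormedSpace.exp_zero]

open scoped Matrix.Norms.L2Operator in
lemma sEI_map_exp {m : ℕ} (L : Matrix (Fin m) (Fin m) ℝ) :
    Matrix.toEuclideanCLM (n := Fin m) (𝕜 := ℝ) (NormedSpace.exp L) =
      NormedSpace.exp (Matrix.toEuclideanCLM (n := Fin m) (𝕜 := ℝ) L) := by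
  have hc : Continuous (Matrix.toEuclideanCLM (n := Fin m) (𝕜 := ℝ)) :=
    LinearMap.continuous_of_finiteDimensional
      (Matrix.toEuclideanCLM (n := Fin m) (𝕜 := ℝ)).toAlgEquiv.toLinearMap
  exact NormedSpace.map_exp_of_mem_ball (𝕂 := ℝ) (Matrix.toEuclideanCLM (n := Fin m) (𝕜 := ℝ)) hc L
    ((NormedSpace.expSeries_radius_eq_top ℝ (Matrix (Fin m) (Fin m) ℝ)).symm ▸ edist_lt_top _ _)

/-- The matrix exponential acts as the exponential of the associated operator. -/
lemma sEI_exp {m : ℕ} (L : Matrix (Fin m) (Fin m) ℝ) (t : ℝ) (v : EuclideanSpace ℝ (Fin m)) :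
    Matrix.toEuclideanLin (NormedSpace.exp (t • L)) v =
      NormedSpace.exp (t • (Matrix.toEuclideanCLM (n := Fin m) (𝕜 := ℝ) L)) v := by
  have := sEI_map_exp (t • L)
  rw [map_smul] at this
  rw [← this]
  rfl

/-- **Second-order convergence of the symmetric exponential integrator.**
Let `L` be a real `m × m` matrix with `‖exp(hL)‖ ≤ 1 + h` for `h ∈ [0,1]` (stated
vectorwise in the Euclidean norm), let `F` be `C²` with `F`, `DF`, `D²F` globally bounded,
and let `U` be the exact solution of `U' = LU + F(U)` on `[0, T]`. For the numerical
solution started with `U⁰ = U(0)`, `U¹ = exp(hL) U⁰ + h exp(hL) F(U⁰)` and advanced via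
`Uⁿ⁺¹ = exp(2hL) Uⁿ⁻¹ + 2h exp(hL) F(Uⁿ)` for `n ≥ 1`, there is a constant `C`,
independent of `n` and `h` but depending on `T`, with `‖U(nh) − Uⁿ‖ ≤ C h²` for all
`0 ≤ n ≤ T/h`. -/
theorem sEI_second_order_convergence (m : ℕ) (L : Matrix (Fin m) (Fin m) ℝ)
    (hL : ∀ h ∈ Set.Icc (0:ℝ) 1, ∀ v : EuclideanSpace ℝ (Fin m),
      ‖Matrix.toEuclideanLin (NormedSpace.exp (h • L)) v‖ ≤ (1 + h) * ‖v‖)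
    (F : EuclideanSpace ℝ (Fin m) → EuclideanSpace ℝ (Fin m)) (hF : ContDiff ℝ 2 F)
    (M : ℝ) (hFb : ∀ x, ‖F x‖ ≤ M) (hDFb : ∀ x, ‖fderiv ℝ F x‖ ≤ M)
    (hD2Fb : ∀ x, ‖iteratedFDeriv ℝ 2 F x‖ ≤ M)
    (T : ℝ) (hT : 0 < T) (U : ℝ → EuclideanSpace ℝ (Fin m))
    (hU : ∀ t ∈ Set.Icc (0:ℝ) T,
      HasDerivWithinAt U (Matrix.toEuclideanLin L (U t) + F (U t)) (Set.Icc (0:ℝ) T) t) :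
    ∃ C : ℝ, ∀ h ∈ Set.Ioc (0:ℝ) 1, ∀ Un : ℕ → EuclideanSpace ℝ (Fin m),
      Un 0 = U 0 →
      Un 1 = Matrix.toEuclideanLin (NormedSpace.exp (h • L)) (U 0)
          + h • Matrix.toEuclideanLin (NormedSpace.exp (h • L)) (F (U 0)) →
      (∀ n : ℕ, 1 ≤ n →
        Un (n + 1) = Matrix.toEuclideanLin (NormedSpace.exp ((2 * h) • L)) (Un (n - 1))
          + (2 * h) • Matrix.toEuclideanLin (NormedSpace.exp (h • L)) (F (Un n))) →
      ∀ n : ℕ, (n : ℝ) ≤ T / h → ‖U (n * h) - Un n‖ ≤ C * h ^ 2 := by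
  simp only [sEI_exp]
  refine sEI_abstract (Matrix.toEuclideanCLM (n := Fin m) (𝕜 := ℝ) L)
    (fun t => NormedSpace.exp (t • (Matrix.toEuclideanCLM (n := Fin m) (𝕜 := ℝ) L)))
    (sEI_exp_zero (R := EuclideanSpace ℝ (Fin m) →L[ℝ] EuclideanSpace ℝ (Fin m)) _)
    (fun a b => sEI_exp_add (R := EuclideanSpace ℝ (Fin m) →L[ℝ] EuclideanSpace ℝ (Fin m)) _ a b)
    (fun t => hasDerivAt_exp_smul_const (𝕂 := ℝ)
      (𝔸 := EuclideanSpace ℝ (Fin m) →L[ℝ] EuclideanSpace ℝ (Fin m)) _ t) F hF M hDFb T hT U hU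
end
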